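/- arXiv:1511.05910 — 3 statements merged into one kernel-verified Lean document; each statement's English description precedes it below -/
import Mathlib

section
/- (Lemma 5.4) Let u : Θ → ℝ be bounded and n ≥ 1. Let 0 = s_1 < ⋯ < s_i ≤ T, x_1, …, x_{i−1} ∈ ℝ^d, x ∈ ℝ^d, write x_i := (x_1,…,x_{i−1},x), and let s ∈ [s_i, T]. Let (θ̂, ℓ̂), with θ̂ = (t̂, ω̂), be 1-optimal in the definition of u^n(s, η^{λ_i}(x)). Then there exists a constant C, depending only on T, p and ‖u‖_∞ (but not on n, s, i, the partition, x_i or the choice of 1-optimal point), such that: |x_i·1 − ω̂_{t̂}| ≤ C n^{−1/(p+1)}, ‖ℓ̂ − I‖_∞ ≤ C n^{−(3p+3)/2}, and ‖η^{λ_i}(x) − ω̂_{t̂∧·}‖_p ≤ C ( n^{−1/(p+1)} + i n^{−(3p+3)/(2p)} |x_i|_p ). -/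
open MeasureTheory Set Filter Topology

noncomputable section

/-- `ℝ^d` with the Euclidean norm. -/
abbrev E (d : ℕ) := EuclideanSpace ℝ (Fin d)

/-- A point `θ = (t, ω)` of `Θ = [0,T] × Ω`, where `Ω` is the set of continuous
paths `[0,T] → ℝ^d` starting from the origin. -/
structure Theta (T : ℝ) (d : ℕ) where
  t : ℝ
  path : ℝ → E d
  ht : t ∈ Set.Icc 0 T
  cont : ContinuousOn path (Set.Icc 0 T)
  init : path 0 = 0

/-- `‖f‖_q^q := ‖f T‖^q + ∫_0^T ‖f s‖^q ds`. -/
def pnormPow (T q : ℝ) {d : ℕ} (f : ℝ → E d) : ℝ :=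
  ‖f T‖ ^ q + ∫ s in (0:ℝ)..T, ‖f s‖ ^ q

/-- `‖f‖_q := (‖f T‖^q + ∫_0^T ‖f s‖^q ds)^(1/q)`. -/
def pnorm (T q : ℝ) {d : ℕ} (f : ℝ → E d) : ℝ := (pnormPow T q f) ^ (1 / q)

/-- The pseudo-distance `d_p(θ,θ') = |t - t'| + ‖ω_{t∧·} - ω'_{t'∧·}‖_p`. -/
def dpDist (T p : ℝ) {d : ℕ} (θ θ' : Theta T d) : ℝ :=
  |θ.t - θ'.t| + pnorm T p (fun s => θ.path (min θ.t s) - θ'.path (min θ'.t s))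

/-- The set `𝓛_{t,s}` of monotone time changes: for `s > 0`, nondecreasing
`ℓ : [0,T] → ℝ` restricting to an increasing bijection from `[0,t]` onto `[0,s]`
with `ℓ(r) = r - t + s` on `(t,T]`; for `s = 0` the single function `ℓ^{t,0}`. -/
def LL (T t s : ℝ) : Set (ℝ → ℝ) :=
  if s = 0 then {fun r => if r ≤ t then 0 else r - t}
  else {ℓ | MonotoneOn ℓ (Set.Icc 0 T) ∧ StrictMonoOn ℓ (Set.Icc 0 t) ∧
        Set.BijOn ℓ (Set.Icc 0 t) (Set.Icc 0 s) ∧ ∀ r ∈ Set.Ioc t T, ℓ r = r - t + s}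

/-- `‖ℓ - I‖_∞ := sup_{0 ≤ r ≤ T} |ℓ(r) - r|`. -/
def supId (T : ℝ) (ℓ : ℝ → ℝ) : ℝ := ⨆ r : Set.Icc (0:ℝ) T, |ℓ r - (r : ℝ)|

/-- The penalization `Φ(s,η,θ,ℓ) := ‖ℓ - I‖_∞^{2/(3p+3)} + ‖η_{s∧ℓ(·)} - ω_{t∧·}‖_{p+1}^{p+1}`. -/
def Phi (T p : ℝ) {d : ℕ} (s : ℝ) (η : ℝ → E d) (θ : Theta T d) (ℓ : ℝ → ℝ) : ℝ :=
  (supId T ℓ) ^ (2 / (3 * p + 3)) +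
    pnormPow T (p + 1) (fun r => η (min s (ℓ r)) - θ.path (min θ.t r))

/-- The regularization
`u^n(s,η) := sup { u(θ) - n Φ(s,η,θ,ℓ) : θ ∈ Θ \ {𝟎}, ℓ ∈ 𝓛_{t,s} }`. -/
def reg (T p : ℝ) {d : ℕ} (u : Theta T d → ℝ) (n : ℕ) (s : ℝ) (η : ℝ → E d) : ℝ :=
  sSup { x | ∃ θ : Theta T d, ∃ ℓ : ℝ → ℝ, (θ.t, θ.path) ≠ (0, 0) ∧ ℓ ∈ LL T θ.t s ∧
        x = u θ - (n : ℝ) * Phi T p s η θ ℓ }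

/-- A càdlàg path on `[0,T]`: right-continuous with left limits. -/
def Cadlag (T : ℝ) {d : ℕ} (η : ℝ → E d) : Prop :=
  (∀ x ∈ Set.Ico (0:ℝ) T, ContinuousWithinAt η (Set.Ici x) x) ∧
  (∀ x ∈ Set.Ioc (0:ℝ) T, ∃ l : E d, Filter.Tendsto η (nhdsWithin x (Set.Iio x)) (𝓝 l))

/-- The piecewise constant path `η^{λ_i}(x)_s = Σ_j x_j 1_{{s ≥ s_j}}`. -/
def pcPath {d i : ℕ} (sVec : Fin i → ℝ) (xVec : Fin i → E d) : ℝ → E d :=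
  fun r => ∑ j : Fin i, if sVec j ≤ r then xVec j else 0


def GG {d k : ℕ} (q h : ℝ) (sv : Fin k → ℝ) (x : Fin k → E d) : ℝ → ℝ := fun r =>
  ∑ j, (Set.Icc (sv j - h) (sv j + h)).indicator (fun _ => (k:ℝ)^q * ‖x j‖^q) r

lemma GG_int {d k : ℕ} (q h a b : ℝ) (sv : Fin k → ℝ) (x : Fin k → E d) :
    IntegrableOn (GG q h sv x) (Set.Ioc a b) := by
  unfold GG
  apply integrable_finsetSum
  intro j _
  apply Integrable.indicator _ measurableSet_Icc
  exact integrable_const _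

lemma GG_integral {d k : ℕ} (q h a b : ℝ) (hh : 0 ≤ h) (sv : Fin k → ℝ) (x : Fin k → E d) :
    ∫ r in Set.Ioc a b, GG q h sv x r ≤ (k:ℝ)^q * (∑ j, ‖x j‖^q) * (2*h) := by
  unfold GG
  rw [integral_finsetSum]
  · rw [Finset.mul_sum, Finset.sum_mul]
    apply Finset.sum_le_sum
    intro j _
    rw [integral_indicator measurableSet_Icc, setIntegral_const, smul_eq_mul, mul_comm]
    apply mul_le_mul_of_nonneg_left _ (by positivity)
    rw [Measure.real, Measure.restrict_apply measurableSet_Icc]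
    apply ENNReal.toReal_le_of_le_ofReal (by positivity)
    calc _ ≤ volume (Set.Icc (sv j - h) (sv j + h)) := measure_mono Set.inter_subset_left
      _ = _ := by rw [Real.volume_Icc]; congr 1; ring
  · intro j _
    apply Integrable.indicator _ measurableSet_Icc
    exact integrable_const _

lemma GG_bound {d k : ℕ} (q h : ℝ) (hq : 1 ≤ q) (sv : Fin k → ℝ) (x c : Fin k → E d) (r : ℝ)
    (h1 : ∀ j, ‖c j‖ ≤ ‖x j‖) (h2 : ∀ j, h < |r - sv j| → c j = 0) :
    ‖∑ j, c j‖ ^ q ≤ GG q h sv x r := by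
  have hq0 : 0 < q := by linarith
  have e1 : ‖∑ j, c j‖ ^ q ≤ (∑ j, ‖c j‖) ^ q :=
    Real.rpow_le_rpow (norm_nonneg _) (norm_sum_le _ _) hq0.le
  have e2 := Real.rpow_sum_le_const_mul_sum_rpow_of_nonneg (Finset.univ : Finset (Fin k)) hq
    (f := fun j => ‖c j‖) (fun j _ => norm_nonneg _)
  refine e1.trans (e2.trans ?_)
  unfold GG
  rw [Finset.mul_sum]
  apply Finset.sum_le_sum
  intro j _
  by_cases hj : r ∈ Set.Icc (sv j - h) (sv j + h)
  · rw [Set.indicator_of_mem hj]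
    have hk : (1:ℝ) ≤ k := by
      have : 0 < k := Fin.pos j
      exact_mod_cast this
    have := Real.rpow_le_rpow (norm_nonneg _) (h1 j) hq0.le
    have h3 : ((Finset.univ : Finset (Fin k)).card : ℝ) ^ (q-1) ≤ (k:ℝ)^q := by
      simp only [Finset.card_univ, Fintype.card_fin]
      exact Real.rpow_le_rpow_of_exponent_le hk (by linarith)
    exact mul_le_mul h3 this (by positivity) (by positivity)
  · rw [Set.indicator_of_notMem hj]
    have : c j = 0 := by
      apply h2
      by_contra hc
      push Not at hc
      rw [abs_le] at hc
      exact hj ⟨by linarith [hc.1], by linarith [hc.2]⟩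
    rw [this, norm_zero, Real.zero_rpow hq0.ne', mul_zero]

lemma pnormPow_nonneg {d : ℕ} {T q : ℝ} (hT : 0 < T) (f : ℝ → E d) : 0 ≤ pnormPow T q f := by
  unfold pnormPow
  have : 0 ≤ ∫ s in (0:ℝ)..T, ‖f s‖ ^ q :=
    intervalIntegral.integral_nonneg hT.le (fun _ _ => by positivity)
  positivity

lemma supId_nonneg (T : ℝ) (l : ℝ → ℝ) : 0 ≤ supId T l :=
  Real.iSup_nonneg fun _ => abs_nonneg _

lemma Phi_nonneg {d : ℕ} {T p : ℝ} (hT : 0 < T) (s : ℝ) (η : ℝ → E d) (θ : Theta T d)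
    (l : ℝ → ℝ) : 0 ≤ Phi T p s η θ l := by
  unfold Phi
  exact add_nonneg (Real.rpow_nonneg (supId_nonneg _ _) _) (pnormPow_nonneg hT _)

/-- ramp -/
def ramp (c h r : ℝ) : ℝ := max 0 (min 1 ((r - c) / h))

lemma ramp_cont (c h : ℝ) : Continuous (ramp c h) := by
  unfold ramp; fun_prop

lemma ramp_zero {c h r : ℝ} (hh : 0 < h) (hr : r ≤ c) : ramp c h r = 0 := by
  unfold ramp
  apply max_eq_left
  exact (min_le_right _ _).trans (div_nonpos_of_nonpos_of_nonneg (by linarith) hh.le)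

lemma ramp_one {c h r : ℝ} (hh : 0 < h) (hr : c + h ≤ r) : ramp c h r = 1 := by
  unfold ramp
  rw [min_eq_left, max_eq_right zero_le_one]
  rw [le_div_iff₀ hh]; linarith

lemma ramp_mem (c h r : ℝ) : 0 ≤ ramp c h r ∧ ramp c h r ≤ 1 := by
  unfold ramp
  exact ⟨le_max_left _ _, max_le zero_le_one (min_le_left _ _)⟩

lemma pcPath_end {d m : ℕ} {sv : Fin (m+1) → ℝ} (x : Fin (m+1) → E d) (hm : StrictMono sv)
    {r : ℝ} (hr : sv (Fin.last m) ≤ r) : pcPath sv x r = ∑ j, x j := by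
  unfold pcPath
  apply Finset.sum_congr rfl
  intro j _
  rw [if_pos ((hm.monotone (Fin.le_last j)).trans hr)]

/-- the approximating point -/
def thA {d k : ℕ} {T : ℝ} (t h : ℝ) (ht : t ∈ Set.Icc 0 T) (hh : 0 < h) (c : Fin k → ℝ)
    (hc : ∀ j, 0 ≤ c j) (x : Fin k → E d) : Theta T d where
  t := t
  path := fun r => ∑ j, ramp (c j) h r • x j
  ht := ht
  cont := by
    apply Continuous.continuousOn
    have := fun j => ramp_cont (c j) h
    fun_prop
  init := by
    apply Finset.sum_eq_zero
    intro j _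
    rw [ramp_zero hh (hc j), zero_smul]

lemma phi_step {d m : ℕ} {T p : ℝ} (hT : 0 < T) (hp : 1 ≤ p) {sv : Fin (m+1) → ℝ}
    (x : Fin (m+1) → E d) {s h : ℝ} (hh : 0 < h) (θ : Theta T d) (l : ℝ → ℝ)
    (w : ℝ → Fin (m+1) → ℝ)
    (hw : ∀ r ∈ Set.Icc 0 T, pcPath sv x (min s (l r)) - θ.path (min θ.t r) = ∑ j, w r j • x j)
    (hw1 : ∀ r ∈ Set.Icc 0 T, ∀ j, |w r j| ≤ 1)
    (hw0 : ∀ r ∈ Set.Icc 0 T, ∀ j, h < |r - sv j| → w r j = 0)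
    (hwT : ∀ j, w T j = 0) :
    pnormPow T (p+1) (fun r => pcPath sv x (min s (l r)) - θ.path (min θ.t r)) ≤
      ((m+1:ℕ):ℝ)^(p+1) * (∑ j, ‖x j‖^(p+1)) * (2*h) := by
  unfold pnormPow
  have h1 : pcPath sv x (min s (l T)) - θ.path (min θ.t T) = 0 := by
    rw [hw T ⟨hT.le, le_rfl⟩]
    exact Finset.sum_eq_zero fun j _ => by rw [hwT, zero_smul]
  beta_reduce
  rw [h1, norm_zero, Real.zero_rpow (by linarith), zero_add,
    intervalIntegral.integral_of_le hT.le]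
  refine le_trans ?_ (GG_integral (p+1) h 0 T hh.le sv x)
  apply integral_mono_of_nonneg
  · exact Filter.Eventually.of_forall fun r => by positivity
  · exact GG_int _ _ _ _ _ _
  · filter_upwards [ae_restrict_mem measurableSet_Ioc] with r hr
    have hr' : r ∈ Set.Icc 0 T := ⟨hr.1.le, hr.2⟩
    simp only [hw r hr']
    apply GG_bound (p+1) h (by linarith)
    · intro j
      rw [norm_smul, Real.norm_eq_abs]
      exact mul_le_of_le_one_left (norm_nonneg _) (hw1 r hr' j)
    · intro j hj
      rw [hw0 r hr' j hj, zero_smul]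

lemma approx {d m : ℕ} {T p : ℝ} (hT : 0 < T) (hp : 1 ≤ p) {sv : Fin (m+1) → ℝ}
    (x : Fin (m+1) → E d) (h0 : sv 0 = 0) (hm : StrictMono sv) {s : ℝ}
    (hs : sv (Fin.last m) ≤ s) (hsT : s ≤ T) {ε : ℝ} (hε : 0 < ε) :
    ∃ (θ : Theta T d) (l : ℝ → ℝ), (θ.t, θ.path) ≠ (0, 0) ∧ l ∈ LL T θ.t s ∧
      Phi T p s (pcPath sv x) θ l ≤ ε := by
  have hsv0 : ∀ j, 0 ≤ sv j := fun j => h0 ▸ hm.monotone (Fin.zero_le j)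
  have hsvs : ∀ j, sv j ≤ s := fun j => (hm.monotone (Fin.le_last j)).trans hs
  have hs0 : 0 ≤ s := (hsv0 _).trans hs
  set B : ℝ := ((m+1:ℕ):ℝ)^(p+1) * (∑ j, ‖x j‖^(p+1)) with hB
  have hB0 : 0 ≤ B := by positivity
  have ha : 0 < 2 / (3 * p + 3) := by positivity
  have key : ∀ b > 0, ∃ h, 0 < h ∧ h ≤ b ∧ h ^ (2 / (3 * p + 3)) + B * (2 * h) ≤ ε := by
    intro b hb
    have hc : ContinuousAt (fun h : ℝ => h ^ (2 / (3 * p + 3)) + B * (2 * h)) 0 := by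
      apply ContinuousAt.add
      · exact Real.continuousAt_rpow_const _ _ (Or.inr ha.le)
      · fun_prop
    have h1 : ∀ᶠ h in 𝓝 (0:ℝ), h ^ (2 / (3 * p + 3)) + B * (2 * h) < ε := by
      apply hc.eventually_lt continuousAt_const
      simp [Real.zero_rpow ha.ne', hε]
    have h2 : ∀ᶠ h in 𝓝[>] (0:ℝ), h ∈ Set.Ioo 0 b := Ioo_mem_nhdsGT hb
    obtain ⟨h, h3, h4⟩ := ((h1.filter_mono nhdsWithin_le_nhds).and h2).exists
    exact ⟨h, h4.1, h4.2.le, h3.le⟩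
  rcases hs0.eq_or_lt with hs0' | hspos
  · obtain ⟨h, hh, hhT, hhε⟩ := key T hT
    have hsvj : ∀ j, sv j = 0 := fun j => le_antisymm (hs0' ▸ hsvs j) (hsv0 j)
    refine ⟨thA h h ⟨hh.le, hhT⟩ hh sv hsv0 x, fun r => if r ≤ h then 0 else r - h, ?_, ?_, ?_⟩
    · intro hc
      have := congrArg Prod.fst hc
      exact hh.ne' this
    · unfold LL
      rw [if_pos hs0'.symm]
      rfl
    · refine le_trans ?_ hhε
      unfold Phi
      apply add_le_add
      · apply Real.rpow_le_rpow (supId_nonneg _ _) _ ha.le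
        have : Nonempty (Set.Icc (0:ℝ) T) := ⟨⟨0, le_rfl, hT.le⟩⟩
        apply ciSup_le
        rintro ⟨r, hr⟩
        simp only
        split_ifs with hc
        · rw [abs_le]; constructor <;> linarith [hr.1]
        · rw [abs_le]; constructor <;> linarith [hr.1]
      · apply phi_step hT hp x hh _ _ (fun r j => 1 - ramp (sv j) h (min h r))
        · intro r hr
          have : min s (if r ≤ h then 0 else r - h) = s := by
            rw [← hs0']
            apply min_eq_left
            split_ifs with hc
            · exact le_rfl
            · linarith
          rw [this, pcPath_end x hm hs]
          simp only [thA, sub_smul, one_smul, Finset.sum_sub_distrib]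
        · intro r hr j
          have := ramp_mem (sv j) h (min h r)
          rw [abs_le]; constructor <;> linarith
        · intro r hr j hj
          rw [hsvj j, sub_zero, abs_of_nonneg hr.1] at hj
          rw [ramp_one hh, sub_self]
          rw [hsvj, zero_add]; exact le_min le_rfl hj.le
        · intro j
          rw [ramp_one hh, sub_self]
          rw [hsvj, zero_add]; exact le_min le_rfl hhT
  · obtain ⟨h, hh, hhs, hhε⟩ := key s hspos
    refine ⟨thA s h ⟨hs0, hsT⟩ hh (fun j => min (sv j) (s - h))
      (fun j => le_min (hsv0 j) (by linarith)) x, id, ?_, ?_, ?_⟩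
    · intro hc
      have := congrArg Prod.fst hc
      exact hspos.ne' this
    · unfold LL
      rw [if_neg hspos.ne']
      refine ⟨monotone_id.monotoneOn _, strictMono_id.strictMonoOn _, Set.bijOn_id _, ?_⟩
      intro r _
      simp [thA]
    · refine le_trans ?_ hhε
      unfold Phi
      apply add_le_add
      · apply Real.rpow_le_rpow (supId_nonneg _ _) _ ha.le
        have : Nonempty (Set.Icc (0:ℝ) T) := ⟨⟨0, le_rfl, hT.le⟩⟩
        apply ciSup_le
        rintro ⟨r, hr⟩
        simp [hh.le]
      · have hend : ∀ j r, s ≤ r → (if sv j ≤ min s r then (1:ℝ) else 0) -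
            ramp (min (sv j) (s - h)) h (min s r) = 0 := by
          intro j r hr
          rw [min_eq_left hr, if_pos (hsvs j), ramp_one hh, sub_self]
          linarith [min_le_right (sv j) (s-h)]
        apply phi_step hT hp x hh _ _ (fun r j => (if sv j ≤ min s r then 1 else 0) -
            ramp (min (sv j) (s - h)) h (min s r))
        · intro r hr
          simp only [thA, pcPath, sub_smul, Finset.sum_sub_distrib, ite_smul, one_smul, zero_smul,
            id]
        · intro r hr j
          have := ramp_mem (min (sv j) (s - h)) h (min s r)
          rw [abs_le]; split_ifs <;> constructor <;> linarith
        · intro r hr j hj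
          rcases le_total s r with hsr | hsr
          · exact hend j r hsr
          · rw [min_eq_right hsr]
            have hcj : sv j - h ≤ min (sv j) (s - h) := le_min (by linarith) (by linarith [hsvs j])
            have hcj' := min_le_left (sv j) (s - h)
            rcases lt_abs.1 hj with h3 | h3
            · rw [if_pos (by linarith), ramp_one hh (by linarith), sub_self]
            · rw [if_neg (by linarith), ramp_zero hh (by linarith), sub_self]
        · intro j
          exact hend j T hsT

lemma LL_facts {T t s : ℝ} (hT : 0 < T) (ht : t ∈ Set.Icc 0 T) (hs0 : 0 ≤ s) {l : ℝ → ℝ}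
    (hl : l ∈ LL T t s) : MonotoneOn l (Set.Icc 0 T) ∧ s ≤ l T := by
  unfold LL at hl
  split_ifs at hl with h
  · rw [Set.mem_singleton_iff] at hl
    subst hl
    constructor
    · intro a ha b hb hab
      beta_reduce
      split_ifs <;> linarith
    · beta_reduce
      split_ifs with h2
      · exact h.le
      · linarith
  · obtain ⟨h1, h2, h3, h4⟩ := hl
    refine ⟨h1, ?_⟩
    rcases ht.2.eq_or_lt with e | e
    · obtain ⟨r, hr, hrs⟩ := h3.surjOn ⟨hs0, le_rfl⟩
      rw [← hrs]
      exact h1 ⟨hr.1, hr.2.trans ht.2⟩ ⟨hT.le, le_rfl⟩ (hr.2.trans ht.2)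
    · rw [h4 T ⟨e, le_rfl⟩]; linarith

lemma le_supId {T : ℝ} {l : ℝ → ℝ} (hT : 0 < T) (hl : MonotoneOn l (Set.Icc 0 T)) {r : ℝ}
    (hr : r ∈ Set.Icc 0 T) : |l r - r| ≤ supId T l := by
  unfold supId
  refine le_ciSup (f := fun r : Set.Icc (0:ℝ) T => |l r - (r : ℝ)|) ?_ ⟨r, hr⟩
  refine ⟨|l 0| + |l T| + T, ?_⟩
  rintro _ ⟨⟨a, ha⟩, rfl⟩
  have h1 := hl ⟨le_rfl, hT.le⟩ ha ha.1
  have h2 := hl ha ⟨hT.le, le_rfl⟩ ha.2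
  have h3 := neg_abs_le (l 0)
  have h4 := le_abs_self (l T)
  have h5 := abs_nonneg (l 0)
  have h6 := abs_nonneg (l T)
  simp only
  rw [abs_le]
  constructor <;> linarith [ha.1, ha.2]

lemma pcPath_meas {d k : ℕ} (sv : Fin k → ℝ) (x : Fin k → E d) : Measurable (pcPath sv x) := by
  unfold pcPath
  apply Finset.measurable_fun_sum
  intro j _
  exact Measurable.ite measurableSet_Ici measurable_const measurable_const

lemma pcPath_norm {d k : ℕ} (sv : Fin k → ℝ) (x : Fin k → E d) (r : ℝ) :
    ‖pcPath sv x r‖ ≤ ∑ j, ‖x j‖ := by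
  unfold pcPath
  refine (norm_sum_le _ _).trans (Finset.sum_le_sum fun j _ => ?_)
  split_ifs <;> simp

lemma f_int {d k : ℕ} {T q : ℝ} (hq : 0 ≤ q) (sv : Fin k → ℝ) (x : Fin k → E d)
    (s : ℝ) (θ : Theta T d) {l : ℝ → ℝ} (hl : MonotoneOn l (Set.Icc 0 T)) :
    IntegrableOn (fun r => ‖pcPath sv x (min s (l r)) - θ.path (min θ.t r)‖ ^ q)
      (Set.Ioc 0 T) := by
  have hmap : ∀ r ∈ Set.Icc 0 T, min θ.t r ∈ Set.Icc 0 T := fun r hr =>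
    ⟨le_min θ.ht.1 hr.1, (min_le_left _ _).trans θ.ht.2⟩
  have hc : ContinuousOn (fun r => θ.path (min θ.t r)) (Set.Icc 0 T) :=
    θ.cont.comp (by fun_prop) hmap
  obtain ⟨W, hW⟩ := isCompact_Icc.exists_bound_of_continuousOn θ.cont
  have m1 : AEMeasurable l (volume.restrict (Set.Ioc 0 T)) :=
    aemeasurable_restrict_of_monotoneOn measurableSet_Ioc (hl.mono Set.Ioc_subset_Icc_self)
  have m2 : AEMeasurable (fun r => pcPath sv x (min s (l r))) (volume.restrict (Set.Ioc 0 T)) :=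
    (pcPath_meas sv x).comp_aemeasurable (aemeasurable_const.min m1)
  have m3 : AEMeasurable (fun r => θ.path (min θ.t r)) (volume.restrict (Set.Ioc 0 T)) :=
    (hc.mono Set.Ioc_subset_Icc_self).aemeasurable measurableSet_Ioc
  refine Integrable.of_bound (C := (∑ j, ‖x j‖ + W) ^ q) ?_ ?_
  · exact ((m2.sub m3).norm.pow_const q).aestronglyMeasurable
  · filter_upwards [ae_restrict_mem measurableSet_Ioc] with r hr
    rw [Real.norm_of_nonneg (by positivity)]
    apply Real.rpow_le_rpow (norm_nonneg _) _ hq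
    exact (norm_sub_le _ _).trans
      (add_le_add (pcPath_norm _ _ _) (hW _ (hmap r (Set.Ioc_subset_Icc_self hr))))

lemma young {p a N : ℝ} (hp : 1 ≤ p) (ha : 0 ≤ a) (hN : 0 < N) :
    a ^ p ≤ N ^ p + a ^ (p+1) / N := by
  rcases le_total a N with h | h
  · have := Real.rpow_le_rpow ha h (by linarith : 0 ≤ p)
    have : 0 ≤ a ^ (p+1) / N := by positivity
    linarith
  · have ha' : 0 < a := hN.trans_le h
    have : a ^ p ≤ a ^ (p+1) / N := by
      rw [le_div_iff₀ hN, Real.rpow_add ha', Real.rpow_one]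
      exact mul_le_mul_of_nonneg_left h (by positivity)
    have : 0 ≤ N ^ p := by positivity
    linarith

lemma addpow_aux {p a b c : ℝ} (hp : 1 ≤ p) (ha : 0 ≤ a) (hb : 0 ≤ b) (hc : 0 ≤ c)
    (h : c ≤ a + b) : c ^ p ≤ 2 ^ p * (a ^ p + b ^ p) := by
  have hp0 : 0 ≤ p := by linarith
  have h1 : 0 ≤ a ^ p := by positivity
  have h2 : 0 ≤ b ^ p := by positivity
  rcases le_total a b with hab | hab
  · calc c ^ p ≤ (2 * b) ^ p := Real.rpow_le_rpow hc (by linarith) hp0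
      _ = 2 ^ p * b ^ p := Real.mul_rpow (by norm_num) hb
      _ ≤ _ := by gcongr; linarith
  · calc c ^ p ≤ (2 * a) ^ p := Real.rpow_le_rpow hc (by linarith) hp0
      _ = 2 ^ p * a ^ p := Real.mul_rpow (by norm_num) ha
      _ ≤ _ := by gcongr; linarith

lemma third {d m : ℕ} {T p : ℝ} (hT : 0 < T) (hp : 1 ≤ p) {sv : Fin (m+1) → ℝ}
    (x : Fin (m+1) → E d) (hm : StrictMono sv) {s : ℝ} (hs0 : 0 ≤ s)
    (hs : sv (Fin.last m) ≤ s) (hsT : s ≤ T) (θ : Theta T d) {l : ℝ → ℝ}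
    (hl : l ∈ LL T θ.t s) {N : ℝ} (hN : 0 < N) :
    pnormPow T p (fun r => pcPath sv x r - θ.path (min θ.t r)) ≤
      2 ^ p * ((T + 1) * N ^ p +
        pnormPow T (p+1) (fun r => pcPath sv x (min s (l r)) - θ.path (min θ.t r)) / N +
        ((m+1:ℕ):ℝ)^p * (∑ j, ‖x j‖^p) * (2 * supId T l)) := by
  obtain ⟨hmon, hlT⟩ := LL_facts hT θ.ht hs0 hl
  have hsvs : ∀ j, sv j ≤ s := fun j => (hm.monotone (Fin.le_last j)).trans hs
  set f : ℝ → E d := fun r => pcPath sv x (min s (l r)) - θ.path (min θ.t r) with hf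
  set δ := supId T l with hδ
  have hfi : IntegrableOn (fun r => ‖f r‖ ^ (p+1)) (Set.Ioc 0 T) :=
    f_int (by linarith) sv x s θ hmon
  have hGi := GG_int p δ 0 T sv x
  have hGb := GG_integral p δ 0 T (supId_nonneg T l) sv x
  have hci : IntegrableOn (fun _ : ℝ => N ^ p) (Set.Ioc 0 T) := integrable_const _
  have hpt : ∀ r ∈ Set.Ioc 0 T, ‖pcPath sv x r - θ.path (min θ.t r)‖ ^ p ≤
      2 ^ p * ((N ^ p + ‖f r‖ ^ (p+1) / N) + GG p δ sv x r) := by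
    intro r hr
    have hr' := Set.Ioc_subset_Icc_self hr
    have hle := le_supId hT hmon hr'
    have hg : ‖pcPath sv x r - pcPath sv x (min s (l r))‖ ^ p ≤ GG p δ sv x r := by
      have : pcPath sv x r - pcPath sv x (min s (l r)) =
          ∑ j, ((if sv j ≤ r then x j else 0) - (if sv j ≤ l r then x j else 0)) := by
        rw [Finset.sum_sub_distrib]
        unfold pcPath
        congr 1
        apply Finset.sum_congr rfl
        intro j _
        simp [hsvs j]
      rw [this]
      apply GG_bound p δ hp
      · intro j
        split_ifs <;> simp
      · intro j hj
        rw [abs_le] at hle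
        rcases lt_abs.1 hj with h3 | h3
        · rw [if_pos (by linarith [supId_nonneg T l]), if_pos (by linarith), sub_self]
        · rw [if_neg (by linarith [supId_nonneg T l]), if_neg (by linarith), sub_self]
    have htri : ‖pcPath sv x r - θ.path (min θ.t r)‖ ≤
        ‖f r‖ + ‖pcPath sv x r - pcPath sv x (min s (l r))‖ := by
      have : pcPath sv x r - θ.path (min θ.t r) =
        f r + (pcPath sv x r - pcPath sv x (min s (l r))) := by
        simp only [hf]; abel
      rw [this]
      exact norm_add_le _ _
    refine (addpow_aux hp (norm_nonneg _) (norm_nonneg _) (norm_nonneg _) htri).trans ?_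
    have := young hp (norm_nonneg (f r)) hN
    gcongr
  have hfT : pcPath sv x T - θ.path (min θ.t T) = f T := by
    simp only [hf]
    rw [min_eq_left hlT, pcPath_end x hm hs, pcPath_end x hm (hs.trans hsT)]
  have h2p : (1:ℝ) ≤ 2 ^ p := Real.one_le_rpow (by norm_num) (by linarith)
  have hTb : ‖f T‖ ^ p ≤ 2 ^ p * (N ^ p + ‖f T‖ ^ (p+1) / N) := by
    have h1 := young hp (norm_nonneg (f T)) hN
    have h2 : 0 ≤ N ^ p + ‖f T‖ ^ (p+1) / N := by positivity
    nlinarith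
  have hint : ∫ r in Set.Ioc 0 T, ‖pcPath sv x r - θ.path (min θ.t r)‖ ^ p ≤
      2 ^ p * ((T * N ^ p + (∫ r in Set.Ioc 0 T, ‖f r‖ ^ (p+1)) / N) +
        ∫ r in Set.Ioc 0 T, GG p δ sv x r) := by
    have i1 : IntegrableOn (fun r => N ^ p + ‖f r‖ ^ (p+1) / N) (Set.Ioc 0 T) :=
      hci.add (hfi.div_const N)
    calc _ ≤ ∫ r in Set.Ioc 0 T, 2 ^ p * ((N ^ p + ‖f r‖ ^ (p+1) / N) + GG p δ sv x r) := by
          apply integral_mono_of_nonneg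
          · exact Filter.Eventually.of_forall fun r => by positivity
          · exact (i1.add hGi).const_mul _
          · filter_upwards [ae_restrict_mem measurableSet_Ioc] with r hr
            exact hpt r hr
      _ = _ := by
          rw [integral_const_mul]
          congr 1
          rw [integral_add i1 hGi]
          congr 1
          rw [integral_add hci (hfi.div_const N), integral_div, setIntegral_const]
          congr 1
          simp [hT.le]
  unfold pnormPow
  rw [intervalIntegral.integral_of_le hT.le, intervalIntegral.integral_of_le hT.le]
  beta_reduce
  rw [hfT]
  have : 0 < (2:ℝ) ^ p := by positivity
  calc _ ≤ 2 ^ p * (N ^ p + ‖f T‖ ^ (p+1) / N) + _ := add_le_add hTb hint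
    _ = 2 ^ p * ((T + 1) * N ^ p + (‖f T‖ ^ (p+1) + ∫ r in Set.Ioc 0 T, ‖f r‖ ^ (p+1)) / N
          + ∫ r in Set.Ioc 0 T, GG p δ sv x r) := by ring
    _ ≤ _ := by gcongr

/-- (Lemma 5.4) Estimates on 1-optimal points `(θ̂, ℓ̂)` in the definition of
`u^n(s, η^{λ_i}(x))`: here `i = m+1`, `xVec = (x_1,…,x_{i-1},x)`, the constant `C > 0`
depends only on `T`, `p` and the bound `M` on `u`. -/
theorem stmt3 (T : ℝ) (hT : 0 < T) (d : ℕ) (hd : 1 ≤ d) (p : ℝ) (hp : 1 ≤ p) (M : ℝ) :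
    ∃ C > 0, ∀ u : Theta T d → ℝ, (∀ θ : Theta T d, |u θ| ≤ M) →
    ∀ n : ℕ, 1 ≤ n →
    ∀ (m : ℕ) (sVec : Fin (m + 1) → ℝ) (xVec : Fin (m + 1) → E d),
      sVec 0 = 0 → StrictMono sVec → sVec (Fin.last m) ≤ T →
    ∀ s : ℝ, sVec (Fin.last m) ≤ s → s ≤ T →
    ∀ (θhat : Theta T d) (ℓhat : ℝ → ℝ),
      (θhat.t, θhat.path) ≠ (0, 0) → ℓhat ∈ LL T θhat.t s →
      -- 1-optimality of `(θ̂, ℓ̂)`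
      reg T p u n s (pcPath sVec xVec) - u θhat
          + (n : ℝ) * Phi T p s (pcPath sVec xVec) θhat ℓhat < 1 →
      ‖(∑ j, xVec j) - θhat.path θhat.t‖ ≤ C * (n : ℝ) ^ (-(1 / (p + 1))) ∧
      supId T ℓhat ≤ C * (n : ℝ) ^ (-((3 * p + 3) / 2)) ∧
      pnorm T p (fun r => pcPath sVec xVec r - θhat.path (min θhat.t r)) ≤
        C * ((n : ℝ) ^ (-(1 / (p + 1)))
          + ((m : ℝ) + 1) * (n : ℝ) ^ (-((3 * p + 3) / (2 * p)))
              * (∑ j, ‖xVec j‖ ^ p) ^ (1 / p)) := by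
  set K : ℝ := 2 * |M| + 2 with hK
  have hK0 : 0 < K := by positivity
  set K' : ℝ := K ^ ((3 * p + 3) / 2) with hK'
  have hK'0 : 0 < K' := by positivity
  set D : ℝ := 2 ^ p * (T + 1 + K) + 2 ^ p * (2 * K') with hD
  have hD0 : 0 < D := by positivity
  have hp0 : 0 < p := by linarith
  have c1 : 0 < K ^ (1 / (p + 1)) := by positivity
  have c3 : 0 < D ^ (1 / p) := by positivity
  refine ⟨K ^ (1 / (p + 1)) + K' + D ^ (1 / p), by positivity, ?_⟩
  intro u hu n hn m sv x h0 hm hlast s hs hsT θ l hθ hl hopt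
  have hsv0 : ∀ j, 0 ≤ sv j := fun j => h0 ▸ hm.monotone (Fin.zero_le j)
  have hs0 : 0 ≤ s := (hsv0 _).trans hs
  have hn0 : (0:ℝ) < n := by exact_mod_cast hn
  obtain ⟨hmon, hlT⟩ := LL_facts hT θ.ht hs0 hl
  -- bound on Phi
  have hPhi : Phi T p s (pcPath sv x) θ l ≤ K / n := by
    obtain ⟨θ', l', e1, e2, e3⟩ := approx (p := p) hT hp x h0 hm hs hsT
      (ε := 1 / (n:ℝ)) (by positivity)
    have hreg : u θ' - n * Phi T p s (pcPath sv x) θ' l' ≤ reg T p u n s (pcPath sv x) := by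
      apply le_csSup
      · refine ⟨M, ?_⟩
        rintro _ ⟨θ₁, l₁, -, -, rfl⟩
        have := (abs_le.1 (hu θ₁)).2
        have := mul_nonneg hn0.le (Phi_nonneg (p := p) hT s (pcPath sv x) θ₁ l₁)
        linarith
      · exact ⟨θ', l', e1, e2, rfl⟩
    have e4 : n * Phi T p s (pcPath sv x) θ' l' ≤ 1 := by
      rw [le_div_iff₀ hn0] at e3; linarith
    have e5 := (abs_le.1 (hu θ')).1
    have e6 := (abs_le.1 (hu θ)).2
    have e7 := le_abs_self M
    rw [le_div_iff₀ hn0]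
    linarith
  set f : ℝ → E d := fun r => pcPath sv x (min s (l r)) - θ.path (min θ.t r) with hf
  have hPP : pnormPow T (p+1) f ≤ K / n := by
    refine le_trans ?_ hPhi
    unfold Phi
    exact le_add_of_nonneg_left (Real.rpow_nonneg (supId_nonneg _ _) _)
  have hδ1 : supId T l ^ (2 / (3 * p + 3)) ≤ K / n := by
    refine le_trans ?_ hPhi
    unfold Phi
    exact le_add_of_nonneg_right (pnormPow_nonneg hT _)
  have hδ : supId T l ≤ K' * (n:ℝ) ^ (-((3 * p + 3) / 2)) := by
    have h1 := Real.rpow_le_rpow (Real.rpow_nonneg (supId_nonneg _ _) _) hδ1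
      (by positivity : 0 ≤ (3 * p + 3) / 2)
    rw [← Real.rpow_mul (supId_nonneg _ _), Real.div_rpow hK0.le hn0.le] at h1
    have e : 2 / (3 * p + 3) * ((3 * p + 3) / 2) = 1 := by field_simp
    rw [e, Real.rpow_one] at h1
    rw [Real.rpow_neg hn0.le]
    exact h1
  set N : ℝ := (n:ℝ) ^ (-(1 / (p + 1))) with hN
  have hN0 : 0 < N := by positivity
  have hNp : N ^ (p+1) = 1 / n := by
    rw [hN, ← Real.rpow_mul hn0.le]
    have : -(1 / (p + 1)) * (p + 1) = -1 := by field_simp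
    rw [this, Real.rpow_neg_one, one_div]
  refine ⟨?_, ?_, ?_⟩
  · have hfT : f T = (∑ j, x j) - θ.path θ.t := by
      simp only [hf]
      rw [min_eq_left hlT, pcPath_end x hm hs, min_eq_left θ.ht.2]
    rw [← hfT]
    have h1 : ‖f T‖ ^ (p+1) ≤ K / n := by
      refine le_trans ?_ hPP
      unfold pnormPow
      exact le_add_of_nonneg_right
        (intervalIntegral.integral_nonneg hT.le (fun _ _ => by positivity))
    have h2 := Real.rpow_le_rpow (by positivity) h1 (by positivity : 0 ≤ 1 / (p + 1))
    rw [← Real.rpow_mul (norm_nonneg _), Real.div_rpow hK0.le hn0.le] at h2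
    have e : (p + 1) * (1 / (p + 1)) = 1 := by field_simp
    rw [e, Real.rpow_one] at h2
    have h3 : ‖f T‖ ≤ K ^ (1 / (p + 1)) * N := by
      rw [hN, Real.rpow_neg hn0.le]; exact h2
    refine h3.trans ?_
    gcongr
    linarith
  · refine hδ.trans ?_
    gcongr
    linarith
  · have h3 := third hT hp x hm hs0 hs hsT θ hl hN0
    set S : ℝ := ∑ j, ‖x j‖ ^ p with hS
    have hS0 : 0 ≤ S := by positivity
    set R : ℝ := ((m : ℝ) + 1) * (n : ℝ) ^ (-((3 * p + 3) / (2 * p))) * S ^ (1 / p) with hR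
    have hR0 : 0 ≤ R := by positivity
    have hRp : R ^ p = ((m : ℝ) + 1) ^ p * (n : ℝ) ^ (-((3 * p + 3) / 2)) * S := by
      rw [hR, Real.mul_rpow (by positivity) (by positivity),
        Real.mul_rpow (by positivity) (by positivity), ← Real.rpow_mul hn0.le,
        ← Real.rpow_mul hS0]
      have e1 : -((3 * p + 3) / (2 * p)) * p = -((3 * p + 3) / 2) := by field_simp
      have e2 : 1 / p * p = 1 := by field_simp
      rw [e1, e2, Real.rpow_one]
    have hPN : pnormPow T (p+1) f / N ≤ K * N ^ p := by
      rw [div_le_iff₀ hN0]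
      have : K * N ^ p * N = K / n := by
        rw [mul_assoc, ← Real.rpow_add_one hN0.ne', hNp]; ring
      rw [this]
      exact hPP
    have hG : ((m+1:ℕ):ℝ)^p * S * (2 * supId T l) ≤ 2 * K' * R ^ p := by
      rw [hRp]
      push_cast
      calc _ ≤ ((m:ℝ)+1)^p * S * (2 * (K' * (n:ℝ) ^ (-((3 * p + 3) / 2)))) := by gcongr
        _ = _ := by ring
    have hNR : N ^ p ≤ (N + R) ^ p := Real.rpow_le_rpow hN0.le (by linarith) hp0.le
    have hRR : R ^ p ≤ (N + R) ^ p := Real.rpow_le_rpow hR0 (by linarith) hp0.le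
    have hfin : pnormPow T p (fun r => pcPath sv x r - θ.path (min θ.t r)) ≤ D * (N + R) ^ p := by
      refine h3.trans ?_
      calc _ ≤ 2 ^ p * ((T + 1) * N ^ p + K * N ^ p + 2 * K' * R ^ p) := by gcongr
        _ ≤ 2 ^ p * ((T + 1) * (N + R) ^ p + K * (N + R) ^ p + 2 * K' * (N + R) ^ p) := by gcongr
        _ = _ := by rw [hD]; ring
    have hroot := Real.rpow_le_rpow (pnormPow_nonneg hT _) hfin (by positivity : 0 ≤ 1 / p)
    rw [Real.mul_rpow hD0.le (by positivity), ← Real.rpow_mul (by positivity)] at hroot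
    have e : p * (1 / p) = 1 := by field_simp
    rw [e, Real.rpow_one] at hroot
    unfold pnorm
    refine hroot.trans ?_
    gcongr
    linarith
end
end

section
/- (Lemma 5.5) Let u : Θ → ℝ be bounded and d_p-uniformly continuous. Then lim_{n→∞} u^n(0, 0) = u(0, 0), where (0,0) denotes the point of Θ with t = 0 and ω the constant zero path. -/
open MeasureTheory Set Filter Topology

noncomputable section

theorem aux_cont {T : ℝ} {d : ℕ} (hT : 0 < T) (θ : Theta T d) (q : ℝ) (hq : 0 < q) :
    IntervalIntegrable (fun s => ‖θ.path (min θ.t s)‖ ^ q) volume 0 T := by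
  apply ContinuousOn.intervalIntegrable
  rw [Set.uIcc_of_le hT.le]
  apply ContinuousOn.rpow_const _ (fun _ _ => Or.inr hq.le)
  apply ContinuousOn.norm
  apply θ.cont.comp (by fun_prop)
  intro s hs
  exact ⟨le_min θ.ht.1 hs.1, (min_le_right _ _).trans hs.2⟩

theorem aux_pt (p c x : ℝ) (hp : 1 ≤ p) (hc : 0 < c) (hx : 0 ≤ x) :
    x ^ p ≤ c ^ p + x ^ (p + 1) / c := by
  rcases le_total x c with h | h
  · have h1 : x ^ p ≤ c ^ p := Real.rpow_le_rpow hx h (by linarith)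
    have h2 : 0 ≤ x ^ (p + 1) / c := by positivity
    linarith
  · have h3 : 0 < x := hc.trans_le h
    have h1 : x ^ p ≤ x ^ (p + 1) / c := by
      rw [le_div_iff₀ hc, Real.rpow_add_one h3.ne']
      gcongr
    have h2 : 0 ≤ c ^ p := by positivity
    linarith

theorem aux_pow_nonneg {T : ℝ} (hT : 0 < T) (q : ℝ) {d : ℕ} (f : ℝ → E d) :
    0 ≤ pnormPow T q f := by
  unfold pnormPow
  have : 0 ≤ ∫ s in (0:ℝ)..T, ‖f s‖ ^ q :=
    intervalIntegral.integral_nonneg hT.le (fun s _ => by positivity)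
  positivity

theorem aux_pow_le {T : ℝ} {d : ℕ} (hT : 0 < T) (θ : Theta T d) (p c : ℝ) (hp : 1 ≤ p)
    (hc : 0 < c) :
    pnormPow T p (fun s => θ.path (min θ.t s)) ≤
      c ^ p * (1 + T) + pnormPow T (p + 1) (fun s => θ.path (min θ.t s)) / c := by
  unfold pnormPow
  have h1 := aux_pt p c ‖θ.path (min θ.t T)‖ hp hc (norm_nonneg _)
  have i1 := aux_cont hT θ (p + 1) (by linarith)
  have h2 : ∫ s in (0:ℝ)..T, ‖θ.path (min θ.t s)‖ ^ p ≤
      ∫ s in (0:ℝ)..T, (c ^ p + ‖θ.path (min θ.t s)‖ ^ (p + 1) / c) := by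
    apply intervalIntegral.integral_mono_on hT.le (aux_cont hT θ p (by linarith))
    · exact intervalIntegrable_const.add (i1.div_const c)
    · intro s _
      exact aux_pt p c _ hp hc (norm_nonneg _)
  rw [intervalIntegral.integral_add intervalIntegrable_const (i1.div_const c),
    intervalIntegral.integral_div, intervalIntegral.integral_const] at h2
  simp only [smul_eq_mul, sub_zero] at h2
  rw [add_div]
  linarith

theorem aux_supId {T : ℝ} (t : ℝ) (ht : t ∈ Set.Icc 0 T) :
    supId T (fun r => if r ≤ t then 0 else r - t) = t := by
  unfold supId
  have hb : ∀ r : Set.Icc (0:ℝ) T,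
      |(if (r:ℝ) ≤ t then 0 else (r:ℝ) - t) - (r : ℝ)| ≤ t := by
    rintro ⟨r, hr0, hrT⟩
    dsimp only
    split_ifs with h
    · rw [zero_sub, abs_neg, abs_of_nonneg hr0]; exact h
    · rw [sub_sub_cancel_left, abs_neg, abs_of_nonneg ht.1]
  haveI : Nonempty (Set.Icc (0:ℝ) T) := ⟨⟨t, ht⟩⟩
  apply le_antisymm (ciSup_le hb)
  refine le_trans ?_ (le_ciSup (f := fun r : Set.Icc (0:ℝ) T =>
      |(if (r:ℝ) ≤ t then 0 else (r:ℝ) - t) - (r : ℝ)|) ⟨t, ?_⟩ ⟨t, ht⟩)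
  · simp [abs_of_nonneg ht.1]
  · rintro _ ⟨r, rfl⟩; exact hb r

theorem aux_Phi {T p : ℝ} {d : ℕ} (θ : Theta T d) :
    Phi T p 0 (0 : ℝ → E d) θ (fun r => if r ≤ θ.t then 0 else r - θ.t) =
      θ.t ^ (2 / (3 * p + 3)) + pnormPow T (p + 1) (fun s => θ.path (min θ.t s)) := by
  unfold Phi
  rw [aux_supId _ θ.ht]
  simp [pnormPow]

/-- (Lemma 5.5) If `u` is bounded and `d_p`-uniformly continuous (with modulus `ρ`),
then `u^n(𝟎) → u(𝟎)` as `n → ∞`, where `𝟎 = (0, 0)` is the point of `Θ` with `t = 0`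
and `ω` the constant zero path. -/
theorem stmt4 (T : ℝ) (hT : 0 < T) (d : ℕ) (hd : 1 ≤ d) (p : ℝ) (hp : 1 ≤ p)
    (u : Theta T d → ℝ) (hub : ∃ M : ℝ, ∀ θ : Theta T d, |u θ| ≤ M)
    (ρ : ℝ → ℝ) (hmono : Monotone ρ)
    (hρ0 : Filter.Tendsto ρ (nhdsWithin 0 (Set.Ioi 0)) (𝓝 0))
    (huc : ∀ θ θ' : Theta T d, |u θ - u θ'| ≤ ρ (dpDist T p θ θ')) :
    Filter.Tendsto (fun n : ℕ => reg T p u n 0 (0 : ℝ → E d)) Filter.atTop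
      (𝓝 (u ⟨0, 0, ⟨le_rfl, hT.le⟩, continuousOn_const, rfl⟩)) := by
  obtain ⟨M, hM⟩ := hub
  set Z : Theta T d := ⟨0, 0, ⟨le_rfl, hT.le⟩, continuousOn_const, rfl⟩ with hZ
  have hdZ : ∀ θ : Theta T d, dpDist T p θ Z =
      θ.t + (pnormPow T p (fun s => θ.path (min θ.t s))) ^ (1 / p) := by
    intro θ
    simp [dpDist, pnorm, hZ, abs_of_nonneg θ.ht.1]
  have hp0 : 0 < p := by linarith
  have ha : 0 < 2 / (3 * p + 3) := by positivity
  have hρz : ρ 0 ≤ 0 := by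
    apply ge_of_tendsto hρ0
    filter_upwards [self_mem_nhdsWithin] with x hx
    exact hmono (le_of_lt hx)
  -- the special point
  let e : E d := EuclideanSpace.single ⟨0, hd⟩ 1
  have he : e ≠ 0 := by
    intro h
    have := congrArg norm h
    simp [e] at this
  let W : Theta T d := ⟨0, fun r => (max r 0) • e, ⟨le_rfl, hT.le⟩, by fun_prop, by simp⟩
  have hW : (W.t, W.path) ≠ (0, 0) := by
    intro h
    have h2 := congrFun (Prod.ext_iff.1 h).2 1
    simp [W, he] at h2
  have hWp : ∀ q : ℝ, 0 < q → pnormPow T q (fun s => W.path (min W.t s)) = 0 := by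
    intro q hq
    simp [pnormPow, W, Real.zero_rpow hq.ne']
  have hWPhi : Phi T p 0 (0 : ℝ → E d) W (fun r => if r ≤ W.t then 0 else r - W.t) = 0 := by
    rw [aux_Phi, hWp _ (by linarith)]
    simp [W, Real.zero_rpow ha.ne']
  have huW : u W = u Z := by
    have h := huc W Z
    rw [hdZ, hWp p hp0, Real.zero_rpow (by positivity)] at h
    have h0 : |u W - u Z| ≤ 0 := by
      refine h.trans ?_
      simpa [W] using hρz
    exact sub_eq_zero.1 (abs_nonpos_iff.1 h0)
  have hmem : ∀ n : ℕ, u Z ∈ { x | ∃ θ : Theta T d, ∃ ℓ : ℝ → ℝ, (θ.t, θ.path) ≠ (0, 0) ∧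
      ℓ ∈ LL T θ.t 0 ∧ x = u θ - (n : ℝ) * Phi T p 0 (0 : ℝ → E d) θ ℓ } := by
    intro n
    refine ⟨W, fun r => if r ≤ W.t then 0 else r - W.t, hW, ?_, ?_⟩
    · simp [LL]
    · rw [hWPhi, huW]; simp
  have hPhi0 : ∀ θ : Theta T d,
      0 ≤ Phi T p 0 (0 : ℝ → E d) θ (fun r => if r ≤ θ.t then 0 else r - θ.t) := by
    intro θ
    rw [aux_Phi]
    have := aux_pow_nonneg hT (p + 1) (fun s => θ.path (min θ.t s))
    have := Real.rpow_nonneg θ.ht.1 (2 / (3 * p + 3))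
    linarith
  have hlow : ∀ n : ℕ, u Z ≤ reg T p u n 0 (0 : ℝ → E d) := by
    intro n
    refine le_csSup ⟨M, ?_⟩ (hmem n)
    rintro x ⟨θ, ℓ, -, hℓ, rfl⟩
    simp only [LL, if_true, Set.mem_singleton_iff] at hℓ
    subst hℓ
    have h1 := mul_nonneg (Nat.cast_nonneg (α := ℝ) n) (hPhi0 θ)
    have h2 := (abs_le.1 (hM θ)).2
    linarith
  rw [Metric.tendsto_atTop]
  intro ε hε
  obtain ⟨δ, hδ, hρδ⟩ : ∃ δ : ℝ, 0 < δ ∧ ρ δ < ε / 2 := by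
    have h1 : ∀ᶠ x in nhdsWithin (0:ℝ) (Set.Ioi 0), ρ x < ε / 2 :=
      hρ0.eventually (gt_mem_nhds (by positivity))
    obtain ⟨x, hx, hx2⟩ := (h1.and self_mem_nhdsWithin).exists
    exact ⟨x, hx2, hx⟩
  -- choose c and the threshold
  have hD : 0 < (δ / 2) ^ p := by positivity
  obtain ⟨c, hc, hcD⟩ : ∃ c : ℝ, 0 < c ∧ c ^ p * (1 + T) = (δ / 2) ^ p / 2 := by
    refine ⟨((δ / 2) ^ p / 2 / (1 + T)) ^ (1 / p), by positivity, ?_⟩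
    rw [← Real.rpow_mul (by positivity), one_div_mul_cancel hp0.ne', Real.rpow_one]
    field_simp
  set κ : ℝ := min ((δ / 2) ^ (2 / (3 * p + 3))) (c * ((δ / 2) ^ p / 2)) with hκ
  have hκ0 : 0 < κ := by positivity
  have hclose : ∀ θ : Theta T d,
      Phi T p 0 (0 : ℝ → E d) θ (fun r => if r ≤ θ.t then 0 else r - θ.t) < κ →
      dpDist T p θ Z ≤ δ := by
    intro θ h
    rw [aux_Phi] at h
    have n1 := aux_pow_nonneg hT (p + 1) (fun s => θ.path (min θ.t s))
    have n2 := Real.rpow_nonneg θ.ht.1 (2 / (3 * p + 3))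
    have k1 : κ ≤ _ := min_le_left _ _
    have k2 : κ ≤ _ := min_le_right _ _
    have t1 : θ.t < δ / 2 := by
      rw [← Real.rpow_lt_rpow_iff θ.ht.1 (by positivity) ha]
      linarith
    have t2 := aux_pow_le hT θ p c hp hc
    have t3 : pnormPow T (p + 1) (fun s => θ.path (min θ.t s)) / c ≤ (δ / 2) ^ p / 2 := by
      rw [div_le_iff₀ hc]
      linarith
    have t4 : (pnormPow T p (fun s => θ.path (min θ.t s))) ^ (1 / p) ≤ δ / 2 := by
      have : (pnormPow T p (fun s => θ.path (min θ.t s))) ^ (1 / p) ≤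
          ((δ / 2) ^ p) ^ (1 / p) := by
        apply Real.rpow_le_rpow (aux_pow_nonneg hT _ _) (by linarith) (by positivity)
      rwa [← Real.rpow_mul (by positivity), mul_one_div_cancel hp0.ne', Real.rpow_one] at this
    rw [hdZ]
    linarith
  obtain ⟨N, hN⟩ := exists_nat_ge (2 * M / κ)
  refine ⟨N, fun n hn => ?_⟩
  have hup : reg T p u n 0 (0 : ℝ → E d) ≤ u Z + ε / 2 := by
    refine csSup_le ⟨_, hmem n⟩ ?_
    rintro x ⟨θ, ℓ, -, hℓ, rfl⟩
    simp only [LL, if_true, Set.mem_singleton_iff] at hℓ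
    subst hℓ
    by_cases h : Phi T p 0 (0 : ℝ → E d) θ (fun r => if r ≤ θ.t then 0 else r - θ.t) < κ
    · have h1 := mul_nonneg (Nat.cast_nonneg (α := ℝ) n) (hPhi0 θ)
      have h2 := (huc θ Z).trans (hmono (hclose θ h))
      have h3 := (abs_le.1 h2).2
      linarith
    · push Not at h
      have h1 : (n : ℝ) * κ ≤ (n : ℝ) * _ := mul_le_mul_of_nonneg_left h (Nat.cast_nonneg n)
      have h2 : 2 * M ≤ n * κ := by
        rw [← div_le_iff₀ hκ0]
        exact hN.trans (by exact_mod_cast hn)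
      have h3 := (abs_le.1 (hM θ)).2
      have h4 := (abs_le.1 (hM Z)).1
      linarith
  rw [Real.dist_eq, abs_of_nonneg (by linarith [hlow n])]
  linarith
end
end

section
/- (Lemma 5.7 (ii)) Let u : Θ → ℝ be bounded, n ≥ 1, and λ_i a fixed partition-jump datum. Then u^{n,λ_i} is locally Lipschitz continuous in the space variable, uniformly in time: for every R > 0 there exists a constant C (depending on n, p, T, R, λ_i and ‖u‖_∞) such that |u^{n,λ_i}(s, x) − u^{n,λ_i}(s, x')| ≤ C |x − x'| for all s ∈ (s_i, T] and all x, x' ∈ ℝ^d with |x|, |x'| ≤ R. -/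
open MeasureTheory Set Filter Topology

noncomputable section

lemma aux_pow (q D : ℝ) (hq : 1 ≤ q) (hD : 0 < D) (a b δ : ℝ) (ha : 0 ≤ a) (hb : 0 ≤ b)
    (hδ : 0 ≤ δ) (hδD : δ ≤ D) (hab : b ≤ a + δ) :
    b ^ q ≤ a ^ q + (2 ^ (q - 1) * (1 + D ^ q) / D) * δ * (1 + a ^ q) := by
  have h1 : b ^ q ≤ (a + δ) ^ q := Real.rpow_le_rpow hb hab (by linarith)
  have hc := (convexOn_rpow hq).2 (show a ∈ Set.Ici (0:ℝ) from ha)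
    (show a + D ∈ Set.Ici (0:ℝ) from by simp only [Set.mem_Ici]; linarith)
    (show 0 ≤ 1 - δ / D by rw [sub_nonneg, div_le_one hD]; exact hδD)
    (show 0 ≤ δ / D by positivity) (by ring)
  have e : (1 - δ / D) • a + (δ / D) • (a + D) = a + δ := by
    simp only [smul_eq_mul]; field_simp; ring
  rw [e] at hc
  simp only [smul_eq_mul] at hc
  have h2 : (a + D) ^ q ≤ 2 ^ (q - 1) * (a ^ q + D ^ q) := by
    have := NNReal.rpow_add_le_mul_rpow_add_rpow ⟨a, ha⟩ ⟨D, hD.le⟩ hq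
    exact_mod_cast this
  have haq : 0 ≤ a ^ q := Real.rpow_nonneg ha q
  have hDq : 0 ≤ D ^ q := Real.rpow_nonneg hD.le q
  have h2q : 0 ≤ (2:ℝ) ^ (q - 1) := by positivity
  have hdd : 0 ≤ δ / D := by positivity
  have h3 : (a + D) ^ q ≤ 2 ^ (q - 1) * ((1 + D ^ q) * (1 + a ^ q)) := by
    refine h2.trans (mul_le_mul_of_nonneg_left ?_ h2q)
    nlinarith [mul_nonneg haq hDq]
  have h4 := mul_le_mul_of_nonneg_left h3 hdd
  have h5 : (2 ^ (q - 1) * (1 + D ^ q) / D) * δ * (1 + a ^ q)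
      = δ / D * (2 ^ (q - 1) * ((1 + D ^ q) * (1 + a ^ q))) := by ring
  rw [h5]
  nlinarith [mul_nonneg hdd haq]

lemma aux_meas {d i : ℕ} (sVec : Fin i → ℝ) (xVec : Fin i → E d) :
    Measurable (pcPath sVec xVec) := by
  unfold pcPath
  refine Finset.measurable_sum _ fun j _ => ?_
  exact Measurable.ite measurableSet_Ici measurable_const measurable_const

lemma aux_bound {d i : ℕ} (sVec : Fin i → ℝ) (xVec : Fin i → E d) (r : ℝ) :
    ‖pcPath sVec xVec r‖ ≤ ∑ j, ‖xVec j‖ := by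
  unfold pcPath
  refine (norm_sum_le _ _).trans (Finset.sum_le_sum fun j _ => ?_)
  split_ifs <;> simp

lemma aux_diff {d m : ℕ} (sVec : Fin (m+1) → ℝ) (xs : Fin m → E d) (x x' : E d) (r : ℝ) :
    ‖pcPath sVec (Fin.snoc xs x' : Fin (m+1) → E d) r
      - pcPath sVec (Fin.snoc xs x : Fin (m+1) → E d) r‖ ≤ ‖x - x'‖ := by
  unfold pcPath
  rw [Fin.sum_univ_castSucc, Fin.sum_univ_castSucc]
  simp only [Fin.snoc_castSucc, Fin.snoc_last, add_sub_add_left_eq_sub]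
  split_ifs
  · rw [norm_sub_rev]
  · simp

lemma aux_int {T p : ℝ} (hT : 0 < T) (hp : 1 ≤ p) {d i : ℕ} (sVec : Fin i → ℝ)
    (xVec : Fin i → E d) (s : ℝ) (θ : Theta T d) (ℓ : ℝ → ℝ) (hℓ : MonotoneOn ℓ (Set.Icc 0 T)) :
    IntervalIntegrable (fun r => ‖pcPath sVec xVec (min s (ℓ r)) - θ.path (min θ.t r)‖ ^ (p+1))
      volume 0 T := by
  have hc : ContinuousOn (fun r => θ.path (min θ.t r)) (Set.Icc 0 T) := by
    refine θ.cont.comp (by fun_prop) ?_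
    intro r hr
    exact ⟨le_min θ.ht.1 hr.1, (min_le_right _ _).trans hr.2⟩
  obtain ⟨B, hB⟩ := isCompact_Icc.exists_bound_of_continuousOn hc
  have hmm : MonotoneOn (fun r => min s (ℓ r)) (Set.Icc 0 T) := fun a ha b hb hab =>
    min_le_min le_rfl (hℓ ha hb hab)
  have hm1 : AEMeasurable (fun r => min s (ℓ r)) (volume.restrict (Set.Icc 0 T)) :=
    aemeasurable_restrict_of_monotoneOn measurableSet_Icc hmm
  have hm2 := (aux_meas sVec xVec).comp_aemeasurable hm1
  have hm3 : AEMeasurable (fun r => θ.path (min θ.t r)) (volume.restrict (Set.Icc 0 T)) :=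
    hc.aemeasurable measurableSet_Icc
  have hm4 : AEMeasurable (fun r => ‖pcPath sVec xVec (min s (ℓ r)) - θ.path (min θ.t r)‖ ^ (p+1))
      (volume.restrict (Set.Icc 0 T)) := ((hm2.sub hm3).norm).pow_const (p+1)
  rw [intervalIntegrable_iff_integrableOn_Icc_of_le hT.le]
  refine Integrable.of_bound hm4.aestronglyMeasurable ((∑ j, ‖xVec j‖ + B) ^ (p+1)) ?_
  refine (ae_restrict_iff' measurableSet_Icc).2 (Eventually.of_forall fun r hr => ?_)
  rw [Real.norm_of_nonneg (by positivity)]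
  refine Real.rpow_le_rpow (norm_nonneg _) ?_ (by linarith)
  exact (norm_sub_le _ _).trans (add_le_add (aux_bound _ _ _) (hB r hr))

lemma aux_supId_s9 (T : ℝ) (ℓ : ℝ → ℝ) : 0 ≤ supId T ℓ := Real.iSup_nonneg fun _ => abs_nonneg _

lemma aux_pnorm {T q : ℝ} (hT : 0 < T) {d : ℕ} (f : ℝ → E d) : 0 ≤ pnormPow T q f := by
  unfold pnormPow
  have : 0 ≤ ∫ s in (0:ℝ)..T, ‖f s‖ ^ q :=
    intervalIntegral.integral_nonneg hT.le fun r _ => by positivity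
  positivity

lemma aux_pnormPow {T q c δ : ℝ} (hT : 0 < T) {d : ℕ} (f g : ℝ → E d)
    (hf : IntervalIntegrable (fun r => ‖f r‖ ^ q) volume 0 T)
    (hg : IntervalIntegrable (fun r => ‖g r‖ ^ q) volume 0 T)
    (h : ∀ r, ‖g r‖ ^ q ≤ ‖f r‖ ^ q + c * δ * (1 + ‖f r‖ ^ q)) :
    pnormPow T q g ≤ pnormPow T q f + c * δ * (1 + T + pnormPow T q f) := by
  unfold pnormPow
  have hi : IntervalIntegrable (fun r => ‖f r‖ ^ q + c * δ * (1 + ‖f r‖ ^ q)) volume 0 T :=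
    hf.add ((intervalIntegrable_const.add hf).const_mul _)
  have h1 := intervalIntegral.integral_mono hT.le hg hi h
  rw [intervalIntegral.integral_add hf ((intervalIntegrable_const.add hf).const_mul _),
    intervalIntegral.integral_const_mul,
    intervalIntegral.integral_add intervalIntegrable_const hf] at h1
  simp at h1
  have h2 := h T
  linarith

lemma aux_pnorm_bd {T q K : ℝ} (hT : 0 < T) (hq : 0 ≤ q) {d : ℕ} (f : ℝ → E d)
    (hf : IntervalIntegrable (fun r => ‖f r‖ ^ q) volume 0 T)
    (h : ∀ r, ‖f r‖ ≤ K) : pnormPow T q f ≤ (1 + T) * K ^ q := by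
  unfold pnormPow
  have h' : ∀ r, ‖f r‖ ^ q ≤ K ^ q := fun r => Real.rpow_le_rpow (norm_nonneg _) (h r) hq
  have h1 := intervalIntegral.integral_mono hT.le hf intervalIntegrable_const h'
  simp at h1
  have := h' T
  linarith

/-- (Lemma 5.7 (ii)) For bounded `u`, the function `u^{n,λ_i}(s,·)` is locally
Lipschitz, uniformly in `s ∈ (s_i, T]`: for every `R > 0` there is `C` with
`|u^{n,λ_i}(s,x) - u^{n,λ_i}(s,x')| ≤ C |x - x'|` whenever `|x|, |x'| ≤ R`. -/
theorem stmt9 (T : ℝ) (hT : 0 < T) (d : ℕ) (hd : 1 ≤ d) (p : ℝ) (hp : 1 ≤ p)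
    (u : Theta T d → ℝ) (hub : ∃ M : ℝ, ∀ θ : Theta T d, |u θ| ≤ M)
    (n : ℕ) (hn : 1 ≤ n)
    (m : ℕ) (sVec : Fin (m + 1) → ℝ) (hs0 : sVec 0 = 0) (hsmono : StrictMono sVec)
    (hsT : sVec (Fin.last m) ≤ T) (xs : Fin m → E d) :
    ∀ R > 0, ∃ C > 0, ∀ s ∈ Set.Ioc (sVec (Fin.last m)) T,
    ∀ x x' : E d, ‖x‖ ≤ R → ‖x'‖ ≤ R →
      |reg T p u n s (pcPath sVec (Fin.snoc xs x))
          - reg T p u n s (pcPath sVec (Fin.snoc xs x'))| ≤ C * ‖x - x'‖ := by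
  obtain ⟨M, hM⟩ := hub
  intro R hR
  set S := ∑ j, ‖xs j‖ with hS
  have hS0 : 0 ≤ S := Finset.sum_nonneg fun _ _ => norm_nonneg _
  set P0 := (1 + T) * (S + R) ^ (p + 1) with hP0
  have hP0' : 0 ≤ P0 := by positivity
  set c := (2:ℝ) ^ ((p + 1) - 1) * (1 + (2 * R) ^ (p + 1)) / (2 * R) with hc
  have hc0 : 0 < c := by positivity
  have hM0 : 0 ≤ M := by
    have := hM ⟨0, fun _ => 0, ⟨le_rfl, hT.le⟩, continuousOn_const, rfl⟩
    exact (abs_nonneg _).trans this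
  have hn0 : (1:ℝ) ≤ n := by exact_mod_cast hn
  have hn0' : (0:ℝ) < n := by linarith
  set C := n * c * (1 + T + (2 * M / n + P0)) with hC
  have hC0 : 0 < C := by positivity
  refine ⟨C, hC0, ?_⟩
  rintro s ⟨hs1, hs2⟩
  have hl0 : 0 ≤ sVec (Fin.last m) := by
    rw [← hs0]; exact hsmono.monotone (Fin.zero_le _)
  have hs : 0 < s := lt_of_le_of_lt hl0 hs1
  have key : ∀ x x' : E d, ‖x‖ ≤ R → ‖x'‖ ≤ R →
      reg T p u n s (pcPath sVec (Fin.snoc xs x))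
        ≤ reg T p u n s (pcPath sVec (Fin.snoc xs x')) + C * ‖x - x'‖ := by
    intro x x' hx hx'
    have hPhi : ∀ (η : ℝ → E d) (θ : Theta T d) (ℓ : ℝ → ℝ), 0 ≤ Phi T p s η θ ℓ := fun η θ ℓ =>
      add_nonneg (Real.rpow_nonneg (aux_supId_s9 _ _) _) (aux_pnorm hT _)
    have hbdd : ∀ η : ℝ → E d, BddAbove { x | ∃ θ : Theta T d, ∃ ℓ : ℝ → ℝ,
        (θ.t, θ.path) ≠ (0, 0) ∧ ℓ ∈ LL T θ.t s ∧ x = u θ - (n : ℝ) * Phi T p s η θ ℓ } := by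
      intro η
      refine ⟨M, ?_⟩
      rintro y ⟨θ, ℓ, -, -, rfl⟩
      have := (abs_le.1 (hM θ)).2
      have := mul_nonneg hn0'.le (hPhi η θ ℓ)
      linarith
    -- reference competitor
    let θ0 : Theta T d := ⟨s, 0, ⟨hs.le, hs2⟩, continuousOn_const, rfl⟩
    have hθ0 : (θ0.t, θ0.path) ≠ (0, 0) := by
      intro h
      exact hs.ne' (congrArg Prod.fst h)
    have hid : (fun r : ℝ => r) ∈ LL T θ0.t s := by
      unfold LL
      rw [if_neg hs.ne']
      refine ⟨fun a _ b _ h => h, fun a _ b _ h => h, Set.bijOn_id _, fun r _ => ?_⟩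
      show r = r - s + s
      ring
    have hPhi0 : ∀ x : E d, ‖x‖ ≤ R →
        Phi T p s (pcPath sVec (Fin.snoc xs x)) θ0 (fun r => r) ≤ P0 := by
      intro x hx
      unfold Phi
      have h0 : supId T (fun r => r) = 0 := by simp [supId]
      rw [h0, Real.zero_rpow (by positivity), zero_add]
      refine aux_pnorm_bd hT (by linarith) _
        (aux_int hT hp sVec _ s θ0 (fun r => r) (fun a _ b _ h => h)) fun r => ?_
      have : θ0.path (min θ0.t r) = 0 := rfl
      rw [this, sub_zero]
      refine (aux_bound _ _ _).trans ?_
      rw [Fin.sum_univ_castSucc]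
      simp only [Fin.snoc_castSucc, Fin.snoc_last]
      linarith
    have hlow : ∀ x : E d, ‖x‖ ≤ R →
        -M - n * P0 ≤ reg T p u n s (pcPath sVec (Fin.snoc xs x)) := by
      intro x hx
      have h1 := le_csSup (hbdd (pcPath sVec (Fin.snoc xs x))) ⟨θ0, fun r => r, hθ0, hid, rfl⟩
      refine le_trans ?_ h1
      have := (abs_le.1 (hM θ0)).1
      have := mul_le_mul_of_nonneg_left (hPhi0 x hx) hn0'.le
      linarith
    have hδ : 0 ≤ ‖x - x'‖ := norm_nonneg _
    refine csSup_le ⟨_, θ0, fun r => r, hθ0, hid, rfl⟩ ?_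
    rintro y ⟨θ, ℓ, hθ, hℓ, rfl⟩
    by_cases hbig : 2 * M / n + P0 ≤ Phi T p s (pcPath sVec (Fin.snoc xs x)) θ ℓ
    · have h1 := (abs_le.1 (hM θ)).2
      have h2 := mul_le_mul_of_nonneg_left hbig hn0'.le
      have h3 : (n:ℝ) * (2 * M / n + P0) = 2 * M + n * P0 := by field_simp
      have h4 := hlow x' hx'
      have h5 := mul_nonneg hC0.le hδ
      linarith
    · push Not at hbig
      have h1 := le_csSup (hbdd (pcPath sVec (Fin.snoc xs x'))) ⟨θ, ℓ, hθ, hℓ, rfl⟩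
      have hmono : MonotoneOn ℓ (Set.Icc 0 T) := by
        unfold LL at hℓ
        rw [if_neg hs.ne'] at hℓ
        exact hℓ.1
      have h2 := aux_pnormPow (c := c) (δ := ‖x - x'‖) hT _ _
        (aux_int hT hp sVec (Fin.snoc xs x : Fin (m+1) → E d) s θ ℓ hmono)
        (aux_int hT hp sVec (Fin.snoc xs x' : Fin (m+1) → E d) s θ ℓ hmono)
        (fun r => by
          refine aux_pow (p+1) (2*R) (by linarith) (by linarith) _ _ _ (norm_nonneg _)
            (norm_nonneg _) hδ ?_ ?_
          · exact (norm_sub_le _ _).trans (by linarith)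
          · have := aux_diff sVec xs x x' (min s (ℓ r))
            refine le_trans ?_ (add_le_add_right this _)
            refine le_trans (le_of_eq ?_) (norm_add_le _ _)
            congr 1
            abel)
      have h3 : Phi T p s (pcPath sVec (Fin.snoc xs x')) θ ℓ
          ≤ Phi T p s (pcPath sVec (Fin.snoc xs x)) θ ℓ
            + c * ‖x - x'‖ * (1 + T + (2 * M / n + P0)) := by
        have h6 := Real.rpow_nonneg (aux_supId_s9 T ℓ) (2 / (3 * p + 3))
        unfold Phi at hbig ⊢
        have h7 := mul_le_mul_of_nonneg_left
          (show 1 + T + pnormPow T (p + 1) (fun r =>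
            pcPath sVec (Fin.snoc xs x : Fin (m+1) → E d) (min s (ℓ r)) - θ.path (min θ.t r))
            ≤ 1 + T + (2 * M / n + P0) by linarith) (mul_nonneg hc0.le hδ)
        linarith
      have h4 := mul_le_mul_of_nonneg_left h3 hn0'.le
      have h5 : (n:ℝ) * (Phi T p s (pcPath sVec (Fin.snoc xs x)) θ ℓ
            + c * ‖x - x'‖ * (1 + T + (2 * M / n + P0)))
          = n * Phi T p s (pcPath sVec (Fin.snoc xs x)) θ ℓ + C * ‖x - x'‖ := by
        rw [hC]; ring
      have h8 : u θ - n * Phi T p s (pcPath sVec (Fin.snoc xs x')) θ ℓ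
        ≤ reg T p u n s (pcPath sVec (Fin.snoc xs x')) := h1
      linarith
  intro x x' hx hx'
  rw [abs_le]
  have h1 := key x x' hx hx'
  have h2 := key x' x hx' hx
  rw [norm_sub_rev x' x] at h2
  constructor <;> linarith
end
end
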